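/- A regular semigroup S is completely regular (every element of S lies in a subgroup of S; equivalently, every element is 𝓗-related to an idempotent) if and only if R(S) is completely regular. -/

import Mathlib

namespace SemibandEmbed

/-- The two-element right-zero semigroup `R₂ = {σ, τ}`. -/
inductive R2 : Type where
  | σ : R2
  | τ : R2
  deriving DecidableEq

section GreenDefs

variable {S : Type*} [Semigroup S]

/-- Green's relation 𝓡 : `a 𝓡 b` iff `a S¹ = b S¹` (inside `S¹ = WithOne S`). -/
def greenR (a b : S) : Prop :=
  {x : WithOne S | ∃ u : WithOne S, x = (a : WithOne S) * u} =
    {x : WithOne S | ∃ u : WithOne S, x = (b : WithOne S) * u}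

/-- Green's relation 𝓛 : `a 𝓛 b` iff `S¹ a = S¹ b`. -/
def greenL (a b : S) : Prop :=
  {x : WithOne S | ∃ u : WithOne S, x = u * (a : WithOne S)} =
    {x : WithOne S | ∃ u : WithOne S, x = u * (b : WithOne S)}

/-- Green's relation 𝓗 = 𝓛 ∩ 𝓡. -/
def greenH (a b : S) : Prop := greenL a b ∧ greenR a b

/-- Green's relation 𝓓 : `a 𝓓 b` iff `a 𝓡 c` and `c 𝓛 b` for some `c`. -/
def greenD (a b : S) : Prop := ∃ c : S, greenR a c ∧ greenL c b

/-- Green's relation 𝓙 : `a 𝓙 b` iff `S¹ a S¹ = S¹ b S¹`. -/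
def greenJ (a b : S) : Prop :=
  {x : WithOne S | ∃ u v : WithOne S, x = u * (a : WithOne S) * v} =
    {x : WithOne S | ∃ u v : WithOne S, x = u * (b : WithOne S) * v}

/-- Mitsch's natural partial order on a semigroup. -/
def natLe (a b : S) : Prop := ∃ x y : S, a = x * b ∧ a = b * y ∧ a = a * y

end GreenDefs

/-- A semigroup is idempotent covered if every element `s` satisfies `s e = s = f s`
for some idempotents `e`, `f`. -/
def IdemCovered (S : Type*) [Semigroup S] : Prop :=
  ∀ s : S, ∃ e f : S, IsIdempotentElem e ∧ IsIdempotentElem f ∧ s * e = s ∧ f * s = s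

/-- A semigroup is regular if every `a` satisfies `a x a = a` for some `x`. -/
def IsRegularSemigroup (S : Type*) [Semigroup S] : Prop :=
  ∀ a : S, ∃ x : S, a * x * a = a

/-- A semigroup is periodic if every element generates a finite monogenic subsemigroup,
i.e. `aᵐ = aⁿ` for some `0 < m < n` (powers computed in `S¹ = WithOne S`). -/
def IsPeriodic (S : Type*) [Semigroup S] : Prop :=
  ∀ a : S, ∃ m n : ℕ, 0 < m ∧ m < n ∧ (a : WithOne S) ^ m = (a : WithOne S) ^ n

/-- `𝓗` is a left congruence. -/
def IsLeftCongH (S : Type*) [Semigroup S] : Prop :=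
  ∀ a b c : S, greenH a b → greenH (c * a) (c * b)

/-- `𝓗` is a right congruence. -/
def IsRightCongH (S : Type*) [Semigroup S] : Prop :=
  ∀ a b c : S, greenH a b → greenH (a * c) (b * c)

/-- A semigroup is completely regular if every element is 𝓗-related to an idempotent. -/
def IsCompletelyRegular (S : Type*) [Semigroup S] : Prop :=
  ∀ a : S, ∃ e : S, IsIdempotentElem e ∧ greenH a e

section SemidirectProduct

variable {S : Type*} [Semigroup S]

/-- The multiplication of the semidirect product `(S × S) * R₂`:
`(t₁,s₁,σ)·(t₂,s₂,α) = (t₁s₂, s₁s₂, α)` and `(t₁,s₁,τ)·(t₂,s₂,α) = (t₁t₂, s₁t₂, α)`. -/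
def sdMul (x y : S × S × R2) : S × S × R2 :=
  match x, y with
  | (t₁, s₁, R2.σ), (_, s₂, α) => (t₁ * s₂, s₁ * s₂, α)
  | (t₁, s₁, R2.τ), (t₂, _, α) => (t₁ * t₂, s₁ * t₂, α)

instance : Mul (S × S × R2) := ⟨sdMul⟩

theorem sdMul_def (x y : S × S × R2) : x * y = sdMul x y := rfl

instance : Semigroup (S × S × R2) where
  mul_assoc x y z := by
    obtain ⟨t₁, s₁, α₁⟩ := x
    obtain ⟨t₂, s₂, α₂⟩ := y
    obtain ⟨t₃, s₃, α₃⟩ := z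
    cases α₁ <;> cases α₂ <;> simp [sdMul_def, sdMul, mul_assoc]

/-- The set `E = {(s,t,α) ∈ E(T*R₂) : s ∈ S¹ t}`. -/
def Eset (S : Type*) [Semigroup S] : Set (S × S × R2) :=
  {x | IsIdempotentElem x ∧ ∃ a : WithOne S, (x.1 : WithOne S) = a * (x.2.1 : WithOne S)}

/-- `T(S)`: the subsemigroup of the semidirect product generated by `E`. -/
def TS (S : Type*) [Semigroup S] : Subsemigroup (S × S × R2) :=
  Subsemigroup.closure (Eset S)

/-- Green's `𝓛` is a right congruence. -/
theorem greenL_mul_right {S : Type*} [Semigroup S] {a b : S} (hab : greenL a b) (c : S) :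
    greenL (a * c) (b * c) := by
  have key : ∀ {a b : S}, greenL a b → ∀ x : WithOne S,
      (∃ u : WithOne S, x = u * ((a * c : S) : WithOne S)) →
      (∃ u : WithOne S, x = u * ((b * c : S) : WithOne S)) := by
    intro a b hab x hx
    obtain ⟨u, rfl⟩ := hx
    have h1 : (u * (a : WithOne S)) ∈
        {x : WithOne S | ∃ u : WithOne S, x = u * (a : WithOne S)} := ⟨u, rfl⟩
    rw [greenL] at hab
    rw [hab] at h1
    obtain ⟨w, hw⟩ := h1
    refine ⟨w, ?_⟩
    rw [WithOne.coe_mul, WithOne.coe_mul, ← mul_assoc, hw, mul_assoc]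
  have hab' : greenL b a := hab.symm
  ext x
  exact ⟨key hab x, key hab' x⟩

/-- `R(S) = {(s,t,α) ∈ T(S) : s 𝓛 t}`, a subsemigroup of `T(S)`. -/
def RS (S : Type*) [Semigroup S] : Subsemigroup ↥(TS S) where
  carrier := {x | greenL (x : S × S × R2).1 (x : S × S × R2).2.1}
  mul_mem' := by
    rintro ⟨⟨s, t, α⟩, hx⟩ ⟨⟨u, v, β⟩, hy⟩ hxs hys
    simp only [Set.mem_setOf_eq] at hxs hys ⊢
    cases α <;> exact greenL_mul_right hxs _

end SemidirectProduct

/-!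
An element lies in a subgroup iff it has a *group inverse*: a commuting `b` with `aba = a` and
`bab = b`. For `x = (s, t, α)` let `p` be the coordinate that decides products `x·x`: `p = t` if
`α = σ` and `p = s` if `α = τ`. Then `(s, t, α)·(s', t', α) = (sp', tp', α)`, so `x ↦ p` is
multiplicative among triples with the same third entry, and group inverses of `x` map to group
inverses of `p`. Conversely, if `b` is a group inverse of `p` and `s 𝓛 t`, then
`(sb², tb², α)` is a group inverse of `x` inside `R(S)`. Every `t` occurs as the `p` of
`(t, t, σ) ∈ R(S)`, so complete regularity passes both ways.
-/

section PrincipalIdeals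

variable {S : Type*} [Semigroup S] {a c e s t : S}

/-- The principal left ideal `S¹t` of `S`, with `S¹` encoded as `WithOne S` as in `greenL`. -/
def principalLeftIdeal (t : S) : Set S :=
  {s | ∃ u : WithOne S, (s : WithOne S) = u * (t : WithOne S)}

/-- The principal right ideal `tS¹` of `S`, with `S¹` encoded as `WithOne S` as in `greenR`. -/
def principalRightIdeal (t : S) : Set S :=
  {s | ∃ u : WithOne S, (s : WithOne S) = (t : WithOne S) * u}

theorem mem_principalLeftIdeal_iff :
    s ∈ principalLeftIdeal t ↔ s = t ∨ ∃ u : S, s = u * t := by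
  simp only [principalLeftIdeal, Set.mem_ofPred_eq, WithOne.exists, one_mul, WithOne.coe_inj,
    ← WithOne.coe_mul]

theorem mem_principalRightIdeal_iff :
    s ∈ principalRightIdeal t ↔ s = t ∨ ∃ u : S, s = t * u := by
  simp only [principalRightIdeal, Set.mem_ofPred_eq, WithOne.exists, mul_one, WithOne.coe_inj,
    ← WithOne.coe_mul]

theorem greenL_iff :
    greenL s t ↔ s ∈ principalLeftIdeal t ∧ t ∈ principalLeftIdeal s := by
  refine ⟨fun h => ⟨h.subset ⟨1, (one_mul _).symm⟩, h.symm.subset ⟨1, (one_mul _).symm⟩⟩, ?_⟩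
  rintro ⟨⟨u, hu⟩, v, hv⟩
  refine Set.Subset.antisymm ?_ ?_
  · rintro _ ⟨w, rfl⟩
    exact ⟨w * u, by rw [mul_assoc, ← hu]⟩
  · rintro _ ⟨w, rfl⟩
    exact ⟨w * v, by rw [mul_assoc, ← hv]⟩

theorem greenR_iff :
    greenR s t ↔ s ∈ principalRightIdeal t ∧ t ∈ principalRightIdeal s := by
  refine ⟨fun h => ⟨h.subset ⟨1, (mul_one _).symm⟩, h.symm.subset ⟨1, (mul_one _).symm⟩⟩, ?_⟩
  rintro ⟨⟨u, hu⟩, v, hv⟩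
  refine Set.Subset.antisymm ?_ ?_
  · rintro _ ⟨w, rfl⟩
    exact ⟨u * w, by rw [← mul_assoc, ← hu]⟩
  · rintro _ ⟨w, rfl⟩
    exact ⟨v * w, by rw [← mul_assoc, ← hv]⟩

theorem mul_eq_self_of_mem_principalLeftIdeal (h : s ∈ principalLeftIdeal t) (hc : t * c = t) :
    s * c = s := by
  rcases mem_principalLeftIdeal_iff.1 h with rfl | ⟨u, rfl⟩
  · exact hc
  · rw [mul_assoc, hc]

theorem mul_eq_self_of_mem_principalRightIdeal (h : s ∈ principalRightIdeal t) (hc : c * t = t) :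
    c * s = s := by
  rcases mem_principalRightIdeal_iff.1 h with rfl | ⟨u, rfl⟩
  · exact hc
  · rw [← mul_assoc, hc]

theorem exists_mul_eq_of_mem_principalLeftIdeal (he : IsIdempotentElem e)
    (h : e ∈ principalLeftIdeal a) : ∃ v : S, v * a = e := by
  rcases mem_principalLeftIdeal_iff.1 h with rfl | ⟨v, hv⟩
  · exact ⟨e, he⟩
  · exact ⟨v, hv.symm⟩

theorem exists_mul_eq_of_mem_principalRightIdeal (he : IsIdempotentElem e)
    (h : e ∈ principalRightIdeal a) : ∃ u : S, a * u = e := by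
  rcases mem_principalRightIdeal_iff.1 h with rfl | ⟨u, hu⟩
  · exact ⟨e, he⟩
  · exact ⟨u, hu.symm⟩

end PrincipalIdeals

/-- `b` is a group inverse of `a`: an inverse of `a` in the sense of semigroup theory that commutes
with `a`. Such a `b` exists exactly when `a` lies in a subgroup, where `b` is its inverse. -/
structure IsGroupInverse {S : Type*} [Mul S] (a b : S) : Prop where
  mul_mul_left : a * b * a = a
  mul_mul_right : b * a * b = b
  comm : a * b = b * a

section GroupInverse

variable {S : Type*} [Semigroup S] {a b e u v : S}

theorem isGroupInverse_of_mul_eq (hea : e * a = a) (hae : a * e = a) (hau : a * u = e)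
    (hva : v * a = e) : IsGroupInverse a (e * u) := by
  have hab : a * (e * u) = e := by rw [← mul_assoc, hae, hau]
  have hba : e * u * a = e :=
    calc e * u * a = v * (a * u) * a := by rw [← mul_assoc, hva]
      _ = e := by rw [hau, mul_assoc, hea, hva]
  have hee : e * e = e :=
    calc e * e = e * a * u := by rw [mul_assoc, hau]
      _ = e := by rw [hea, hau]
  exact ⟨by rw [hab, hea], by rw [hba, ← mul_assoc, hee], hab.trans hba.symm⟩

theorem IsGroupInverse.isIdempotentElem (h : IsGroupInverse a b) : IsIdempotentElem (a * b) := by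
  rw [IsIdempotentElem, ← mul_assoc, h.mul_mul_left]

theorem IsGroupInverse.greenH (h : IsGroupInverse a b) : greenH a (a * b) := by
  refine ⟨greenL_iff.2 ?_, greenR_iff.2 ?_⟩ <;>
    simp only [mem_principalLeftIdeal_iff, mem_principalRightIdeal_iff]
  · exact ⟨.inr ⟨a, by rw [h.comm, ← mul_assoc, h.mul_mul_left]⟩, .inr ⟨b, h.comm⟩⟩
  · exact ⟨.inr ⟨a, h.mul_mul_left.symm⟩, .inr ⟨b, rfl⟩⟩

theorem exists_isGroupInverse_of_greenH (he : IsIdempotentElem e) (h : greenH a e) :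
    ∃ b, IsGroupInverse a b := by
  obtain ⟨haL, heL⟩ := greenL_iff.1 h.1
  obtain ⟨haR, heR⟩ := greenR_iff.1 h.2
  obtain ⟨v, hva⟩ := exists_mul_eq_of_mem_principalLeftIdeal he heL
  obtain ⟨u, hau⟩ := exists_mul_eq_of_mem_principalRightIdeal he heR
  exact ⟨e * u, isGroupInverse_of_mul_eq (mul_eq_self_of_mem_principalRightIdeal haR he)
    (mul_eq_self_of_mem_principalLeftIdeal haL he) hau hva⟩

theorem isCompletelyRegular_iff_exists_isGroupInverse :
    IsCompletelyRegular S ↔ ∀ a : S, ∃ b, IsGroupInverse a b := by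
  refine forall_congr' fun a => ⟨?_, ?_⟩
  · rintro ⟨e, he, hae⟩
    exact exists_isGroupInverse_of_greenH he hae
  · rintro ⟨b, hb⟩
    exact ⟨a * b, hb.isIdempotentElem, hb.greenH⟩

theorem isGroupInverse_coe {M : Subsemigroup S} {x y : M} :
    IsGroupInverse (x : S) (y : S) ↔ IsGroupInverse x y := by
  constructor <;> rintro ⟨h₁, h₂, h₃⟩
  · exact ⟨Subtype.ext h₁, Subtype.ext h₂, Subtype.ext h₃⟩
  · exact ⟨congrArg Subtype.val h₁, congrArg Subtype.val h₂, congrArg Subtype.val h₃⟩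

end GroupInverse

theorem IsRegularSemigroup.idemCovered {S : Type*} [Semigroup S] (hS : IsRegularSemigroup S) :
    IdemCovered S := by
  intro a
  obtain ⟨x, hx⟩ := hS a
  refine ⟨x * a, a * x, ?_, ?_, by rw [← mul_assoc, hx], hx⟩
  · rw [IsIdempotentElem, mul_assoc, ← mul_assoc a, hx]
  · rw [IsIdempotentElem, ← mul_assoc, hx]

section Pivot

variable {S : Type*}

/-- The coordinate of a right factor `x` that enters a product `y * x` when `y` has third entry
`α`. -/
def R2.coord (α : R2) (x : S × S × R2) : S :=
  match α with
  | R2.σ => x.2.1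
  | R2.τ => x.1

/-- The coordinate of `x` that enters the product `x * x`: `t` for `(s, t, σ)` and `s` for
`(s, t, τ)`. -/
def pivot (x : S × S × R2) : S :=
  x.2.2.coord x

variable [Semigroup S] {x y : S × S × R2}

theorem sd_mul_eq (x y : S × S × R2) :
    x * y = (x.1 * x.2.2.coord y, x.2.1 * x.2.2.coord y, y.2.2) := by
  obtain ⟨s, t, _ | _⟩ := x <;> rfl

theorem coord_mul_right (α : R2) (x : S × S × R2) (c : S) (β : R2) :
    α.coord (x.1 * c, x.2.1 * c, β) = α.coord x * c := by
  cases α <;> rfl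

theorem isIdempotentElem_iff_mul_pivot :
    IsIdempotentElem x ↔ x.1 * pivot x = x.1 ∧ x.2.1 * pivot x = x.2.1 := by
  obtain ⟨s, t, α⟩ := x
  simp only [IsIdempotentElem, sd_mul_eq, pivot, Prod.mk.injEq, and_true]

theorem pivot_mul (h : x.2.2 = y.2.2) : pivot (x * y) = pivot x * pivot y := by
  rw [sd_mul_eq, pivot, coord_mul_right, pivot, pivot, h]

theorem isGroupInverse_pivot (h : IsGroupInverse x y) : IsGroupInverse (pivot x) (pivot y) := by
  have hxy : x.2.2 = y.2.2 := by
    simpa only [sd_mul_eq] using congrArg (fun z => z.2.2) h.comm.symm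
  have hxy' : (x * y).2.2 = x.2.2 := by rw [sd_mul_eq, hxy]
  have hyx' : (y * x).2.2 = y.2.2 := by rw [sd_mul_eq, hxy]
  refine ⟨?_, ?_, ?_⟩
  · rw [← pivot_mul hxy, ← pivot_mul hxy', h.mul_mul_left]
  · rw [← pivot_mul hxy.symm, ← pivot_mul hyx', h.mul_mul_right]
  · rw [← pivot_mul hxy, ← pivot_mul hxy.symm, h.comm]

theorem isGroupInverse_of_pivot {b : S} (hb : IsGroupInverse (pivot x) b)
    (h₁ : x.1 ∈ principalLeftIdeal (pivot x)) (h₂ : x.2.1 ∈ principalLeftIdeal (pivot x)) :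
    IsGroupInverse x (x.1 * (b * b), x.2.1 * (b * b), x.2.2) := by
  have hp : x.2.2.coord x = pivot x := rfl
  have hpbb : pivot x * (b * b) = b := by rw [← mul_assoc, hb.comm, hb.mul_mul_right]
  have hbbp : b * b * pivot x = b := by rw [mul_assoc, ← hb.comm, ← mul_assoc, hb.mul_mul_right]
  have hpbp : pivot x * (b * pivot x) = pivot x := by rw [← mul_assoc, hb.mul_mul_left]
  have hs := mul_eq_self_of_mem_principalLeftIdeal h₁ hpbp
  have ht := mul_eq_self_of_mem_principalLeftIdeal h₂ hpbp
  have hxy : x * (x.1 * (b * b), x.2.1 * (b * b), x.2.2) = (x.1 * b, x.2.1 * b, x.2.2) := by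
    rw [sd_mul_eq, coord_mul_right, hp, hpbb]
  have hyx : (x.1 * (b * b), x.2.1 * (b * b), x.2.2) * x = (x.1 * b, x.2.1 * b, x.2.2) := by
    rw [sd_mul_eq, hp, mul_assoc, mul_assoc x.2.1, hbbp]
  refine ⟨?_, ?_, hxy.trans hyx.symm⟩
  · rw [hxy, sd_mul_eq, hp, mul_assoc, mul_assoc x.2.1, hs, ht]
  · rw [hyx, sd_mul_eq, coord_mul_right, hp, hpbb, mul_assoc, mul_assoc]

theorem mem_principalLeftIdeal_pivot_of_greenL (h : greenL x.1 x.2.1) :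
    x.1 ∈ principalLeftIdeal (pivot x) ∧ x.2.1 ∈ principalLeftIdeal (pivot x) := by
  obtain ⟨s, t, _ | _⟩ := x
  · exact ⟨(greenL_iff.1 h).1, (greenL_iff.1 rfl).1⟩
  · exact ⟨(greenL_iff.1 rfl).1, (greenL_iff.1 h).2⟩

end Pivot

section Membership

variable {S : Type*} [Semigroup S] {e s t : S}

theorem mk_σ_mem_TS (he : IsIdempotentElem e) (hs : s * e = s) : (s, e, R2.σ) ∈ TS S :=
  Subsemigroup.subset_closure
    ⟨isIdempotentElem_iff_mul_pivot.2 ⟨hs, he⟩, s, by rw [← WithOne.coe_mul, hs]⟩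

theorem mk_τ_mem_TS (he : IsIdempotentElem e) : (e, e, R2.τ) ∈ TS S :=
  Subsemigroup.subset_closure
    ⟨isIdempotentElem_iff_mul_pivot.2 ⟨he, he⟩, 1, (one_mul _).symm⟩

theorem mem_TS_of_mem_principalLeftIdeal (hS : IdemCovered S)
    (hst : s ∈ principalLeftIdeal t) (α : R2) : (s, t, α) ∈ TS S := by
  obtain ⟨e, f, he, hf, hte, hft⟩ := hS t
  have hdiag : (t, t, R2.σ) ∈ TS S := by
    have hprod : (f, f, R2.τ) * (t, e, R2.σ) = (t, t, R2.σ) := by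
      simp only [sd_mul_eq, R2.coord, hft]
    exact hprod ▸ mul_mem (mk_τ_mem_TS hf) (mk_σ_mem_TS he hte)
  have hσ : (s, t, R2.σ) ∈ TS S := by
    rcases mem_principalLeftIdeal_iff.1 hst with rfl | ⟨u, rfl⟩
    · exact hdiag
    · have hprod : (u * f, f, R2.σ) * (t, t, R2.σ) = (u * t, t, R2.σ) := by
        simp only [sd_mul_eq, R2.coord, mul_assoc, hft]
      exact hprod ▸ mul_mem (mk_σ_mem_TS hf (by rw [mul_assoc, hf])) hdiag
  cases α with
  | σ => exact hσ
  | τ =>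
    have hse : s * e = s := mul_eq_self_of_mem_principalLeftIdeal hst hte
    have hprod : (s, t, R2.σ) * (e, e, R2.τ) = (s, t, R2.τ) := by
      simp only [sd_mul_eq, R2.coord, hse, hte]
    exact hprod ▸ mul_mem hσ (mk_τ_mem_TS he)

theorem exists_RS_coe_eq (hS : IdemCovered S) (hst : greenL s t) (α : R2) :
    ∃ r : RS S, (r : S × S × R2) = (s, t, α) :=
  ⟨⟨⟨(s, t, α), mem_TS_of_mem_principalLeftIdeal hS (greenL_iff.1 hst).1 α⟩, hst⟩, rfl⟩

theorem isGroupInverse_RS_coe {r r' : RS S} :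
    IsGroupInverse (r : S × S × R2) (r' : S × S × R2) ↔ IsGroupInverse r r' :=
  isGroupInverse_coe.trans isGroupInverse_coe

end Membership

theorem statement_19_general {S : Type*} [Semigroup S] (hS : IdemCovered S) :
    IsCompletelyRegular S ↔ IsCompletelyRegular ↥(RS S) := by
  simp only [isCompletelyRegular_iff_exists_isGroupInverse]
  constructor
  · intro h r
    have hr : greenL (r : S × S × R2).1 (r : S × S × R2).2.1 := r.2
    obtain ⟨b, hb⟩ := h (pivot (r : S × S × R2))
    obtain ⟨hs, ht⟩ := mem_principalLeftIdeal_pivot_of_greenL hr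
    obtain ⟨r', hr'⟩ := exists_RS_coe_eq hS (greenL_mul_right hr (b * b)) (r : S × S × R2).2.2
    exact ⟨r', isGroupInverse_RS_coe.1 (hr' ▸ isGroupInverse_of_pivot hb hs ht)⟩
  · intro h t
    obtain ⟨r, hr⟩ := exists_RS_coe_eq hS (rfl : greenL t t) R2.σ
    obtain ⟨r', hr'⟩ := h r
    have hpivot : pivot (r : S × S × R2) = t := by rw [hr]; rfl
    exact ⟨pivot (r' : S × S × R2), hpivot ▸ isGroupInverse_pivot (isGroupInverse_RS_coe.2 hr')⟩

/-- a regular semigroup `S` is completely regular iff `R(S)` is. -/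
theorem statement_19 {S : Type*} [Semigroup S] (hS : IsRegularSemigroup S) :
    IsCompletelyRegular S ↔ IsCompletelyRegular ↥(RS S) :=
  statement_19_general hS.idemCovered

end SemibandEmbed
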